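/- arXiv:2302.08925 — 2 statements merged into one kernel-verified Lean document; each statement's English description precedes it below -/
import Mathlib

section
/- Let c, φ : [0,a] → ℝ be continuously differentiable with c(u) > 0 and φ'(u) > 0 for all u, and let f, z : [0,b] → ℝ be continuously differentiable with z'(v) > 0 for all v. Put ξ(u) = c(u)·(cos φ(u), sin φ(u)). Fix t ∈ ℝ such that c(u)² + t > 0 and c(u)⁴φ'(u)² + t·(c(u)²φ'(u)² + c'(u)²) ≥ 0 for all u, and z'(v)² − t·f'(v)² ≥ 0 for all v. Define φᵗ(u) = φ(0) + ∫₀ᵘ √( c(w)⁴φ'(w)² + t(c(w)²φ'(w)² + c'(w)²) ) / (c(w)² + t) dw, zᵗ(v) = z(0) + ∫₀ᵛ √( z'(w)² − t f'(w)² ) dw, and σᵗ(u,v) = ( f(v)√(c(u)²+t)·cos φᵗ(u), f(v)√(c(u)²+t)·sin φᵗ(u), zᵗ(v) ). Then for all (u,v): ‖σᵗ_u(u,v)‖² = f(v)²·(c'(u)² + c(u)²φ'(u)²) = f(v)²‖ξ'(u)‖², ⟪σᵗ_u(u,v), σᵗ_v(u,v)⟫ = f(v)f'(v)·c(u)c'(u)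 = f(v)f'(v)·⟪ξ'(u), ξ(u)⟫, and ‖σᵗ_v(u,v)‖² = f'(v)²c(u)² + z'(v)² = f'(v)²‖ξ(u)‖² + z'(v)². In particular the first fundamental form of σᵗ coincides with that of the axial T-surface σ⁰(u,v) = (f(v)ξ(u), z(v)). -/
open Real Set

/-- A vector in Euclidean space `ℝ³` given by its three coordinates. -/
noncomputable def e3 (x y z : ℝ) : EuclideanSpace ℝ (Fin 3) := !₂[x, y, z]

theorem ftc_aux (a k : ℝ) (g G : ℝ → ℝ) (hg : ContinuousOn g (Icc 0 a))
    (hG : ∀ u, G u = k + ∫ w in (0:ℝ)..u, g w) (u : ℝ) (hu : u ∈ Icc 0 a) :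
    HasDerivWithinAt G (g u) (Icc 0 a) u := by
  have h0 : (0:ℝ) ≤ a := hu.1.trans hu.2
  have hcont : Continuous (IccExtend h0 ((Icc 0 a).domRestrict g)) :=
    (continuousOn_iff_continuous_domRestrict.mp hg).Icc_extend'
  have hE : ∀ x ∈ Icc 0 a, IccExtend h0 ((Icc 0 a).domRestrict g) x = g x := by
    intro x hx
    rw [IccExtend_of_mem h0 _ hx]; rfl
  have hd := ((intervalIntegral.integral_hasDerivAt_right (hcont.intervalIntegrable 0 u)
    (hcont.stronglyMeasurableAtFilter _ _) hcont.continuousAt).const_add k).hasDerivWithinAt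
    (s := Icc 0 a)
  rw [hE u hu] at hd
  have key : ∀ x ∈ Icc 0 a, G x = k + ∫ w in (0:ℝ)..x,
      IccExtend h0 ((Icc 0 a).domRestrict g) w := by
    intro x hx
    rw [hG]
    congr 1
    apply intervalIntegral.integral_congr
    intro w hw
    rw [uIcc_of_le hx.1] at hw
    exact (hE w ⟨hw.1, hw.2.trans hx.2⟩).symm
  exact hd.congr key (key u hu)

theorem e3_deriv (x y z : ℝ → ℝ) (x' y' z' u : ℝ) (s : Set ℝ)
    (hx : HasDerivWithinAt x x' s u) (hy : HasDerivWithinAt y y' s u)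
    (hz : HasDerivWithinAt z z' s u) :
    HasDerivWithinAt (fun w => e3 (x w) (y w) (z w)) (e3 x' y' z') s u := by
  rw [hasDerivWithinAt_iff_hasFDerivWithinAt, hasFDerivWithinAt_euclidean]
  intro i
  fin_cases i
  · exact hx.hasFDerivWithinAt.congr_fderiv (by ext; simp [e3])
  · exact hy.hasFDerivWithinAt.congr_fderiv (by ext; simp [e3])
  · exact hz.hasFDerivWithinAt.congr_fderiv (by ext; simp [e3])

theorem e3_inner (x y z x' y' z' : ℝ) :
    (inner ℝ (e3 x y z) (e3 x' y' z') : ℝ) = x * x' + y * y' + z * z' := by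
  simp [e3, PiLp.inner_apply, Fin.sum_univ_three]
  ring

/-- **Theorem 5.5.** The explicit isometric deformation of an axial T-surface
`σ⁰(u,v) = (f(v)ξ(u), z(v))`, `ξ(u) = c(u)(cos φ(u), sin φ(u))`: the deformed surface `σᵗ`
has first fundamental form `E = f²(c'² + c²φ'²) = f²‖ξ'‖²`, `F = f f' c c' = f f' ⟪ξ', ξ⟫`,
`G = f'²c² + z'² = f'²‖ξ‖² + z'²`, i.e. the same as `σ⁰`. -/
theorem stmt_15 (a b : ℝ)
    (c φ c' φ' f z f' z' : ℝ → ℝ)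
    (hc : ∀ u ∈ Icc 0 a, HasDerivWithinAt c (c' u) (Icc 0 a) u)
    (hφ : ∀ u ∈ Icc 0 a, HasDerivWithinAt φ (φ' u) (Icc 0 a) u)
    (hc' : ContinuousOn c' (Icc 0 a)) (hφ'c : ContinuousOn φ' (Icc 0 a))
    (hcpos : ∀ u ∈ Icc 0 a, 0 < c u) (hφ'pos : ∀ u ∈ Icc 0 a, 0 < φ' u)
    (hf : ∀ v ∈ Icc 0 b, HasDerivWithinAt f (f' v) (Icc 0 b) v)
    (hz : ∀ v ∈ Icc 0 b, HasDerivWithinAt z (z' v) (Icc 0 b) v)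
    (hf' : ContinuousOn f' (Icc 0 b)) (hz' : ContinuousOn z' (Icc 0 b))
    (hz'pos : ∀ v ∈ Icc 0 b, 0 < z' v)
    (t : ℝ)
    (htc : ∀ u ∈ Icc 0 a, 0 < c u ^ 2 + t)
    (htφ : ∀ u ∈ Icc 0 a,
      0 ≤ c u ^ 4 * φ' u ^ 2 + t * (c u ^ 2 * φ' u ^ 2 + c' u ^ 2))
    (htz : ∀ v ∈ Icc 0 b, 0 ≤ z' v ^ 2 - t * f' v ^ 2)
    (φt zt : ℝ → ℝ)
    (hφt : ∀ u, φt u = φ 0 + ∫ w in (0:ℝ)..u,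
        Real.sqrt (c w ^ 4 * φ' w ^ 2 + t * (c w ^ 2 * φ' w ^ 2 + c' w ^ 2)) / (c w ^ 2 + t))
    (hzt : ∀ v, zt v = z 0 + ∫ w in (0:ℝ)..v, Real.sqrt (z' w ^ 2 - t * f' w ^ 2))
    (σ : ℝ → ℝ → EuclideanSpace ℝ (Fin 3))
    (hσ : ∀ u v, σ u v =
      e3 (f v * Real.sqrt (c u ^ 2 + t) * cos (φt u))
         (f v * Real.sqrt (c u ^ 2 + t) * sin (φt u))
         (zt v)) :
    ∀ u ∈ Icc 0 a, ∀ v ∈ Icc 0 b,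
      ∃ su sv : EuclideanSpace ℝ (Fin 3),
        HasDerivWithinAt (fun u' => σ u' v) su (Icc 0 a) u ∧
        HasDerivWithinAt (fun v' => σ u v') sv (Icc 0 b) v ∧
        ‖su‖ ^ 2 = f v ^ 2 * (c' u ^ 2 + c u ^ 2 * φ' u ^ 2) ∧
        (inner ℝ su sv : ℝ) = f v * f' v * (c u * c' u) ∧
        ‖sv‖ ^ 2 = f' v ^ 2 * c u ^ 2 + z' v ^ 2 := by
  intro u hu v hv
  have hcc : ContinuousOn c (Icc 0 a) := fun x hx => (hc x hx).continuousWithinAt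
  have hφd := ftc_aux a _ _ φt (by
    apply ContinuousOn.div
    · apply ContinuousOn.sqrt
      fun_prop
    · fun_prop
    · intro x hx
      exact (htc x hx).ne') hφt u hu
  have hzd := ftc_aux b _ _ zt (by
    apply ContinuousOn.sqrt
    fun_prop) hzt v hv
  have hr : HasDerivWithinAt (fun w => √(c w ^ 2 + t)) (c u * c' u / √(c u ^ 2 + t))
      (Icc 0 a) u := by
    refine ((((hc u hu).pow 2).add_const t).sqrt (htc u hu).ne').congr_deriv ?_
    simp only [Pi.pow_apply]
    push_cast
    rw [pow_one, mul_assoc, mul_div_mul_left _ _ two_ne_zero]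
  have hR := Real.sq_sqrt (htc u hu).le
  have hRpos := Real.sqrt_pos.mpr (htc u hu)
  have hQ := Real.sq_sqrt (htφ u hu)
  have hZ := Real.sq_sqrt (htz v hv)
  have hcs := Real.sin_sq_add_cos_sq (φt u)
  have hsu := e3_deriv _ _ _ _ _ _ _ _ ((hr.const_mul (f v)).mul hφd.cos)
      ((hr.const_mul (f v)).mul hφd.sin) (hasDerivWithinAt_const u (Icc 0 a) (zt v))
  have hsv := e3_deriv _ _ _ _ _ _ _ _
      (((hf v hv).mul_const (√(c u ^ 2 + t))).mul_const (cos (φt u)))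
      (((hf v hv).mul_const (√(c u ^ 2 + t))).mul_const (sin (φt u))) hzd
  refine ⟨_, _, hsu.congr (fun w _ => hσ w v) (hσ u v),
    hsv.congr (fun w _ => hσ u w) (hσ u v), ?_⟩
  rw [← real_inner_self_eq_norm_sq, ← real_inner_self_eq_norm_sq]
  simp only [e3_inner]
  clear hsu hsv hr hφd hzd hφt hzt hσ
  generalize √(c u ^ 4 * φ' u ^ 2 + t * (c u ^ 2 * φ' u ^ 2 + c' u ^ 2)) = Q at *
  generalize √(z' v ^ 2 - t * f' v ^ 2) = Z at *
  clear htc htφ htz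
  generalize √(c u ^ 2 + t) = R at *
  rw [← hR]
  generalize sin (φt u) = S at *
  generalize cos (φt u) = C at *
  have hR0 := hRpos.ne'
  refine ⟨?_, ?_, ?_⟩
  · have e : Q ^ 2 = R ^ 2 * (c u ^ 2 * φ' u ^ 2 + c' u ^ 2) - c u ^ 2 * c' u ^ 2 := by
      rw [hQ, hR]; ring
    trans (f v ^ 2 * (c u ^ 2 * c' u ^ 2 + Q ^ 2) / R ^ 2) * (S ^ 2 + C ^ 2)
    · field_simp
      ring
    · rw [hcs, e]
      field_simp
      ring
  · trans (f v * f' v * (c u * c' u)) * (S ^ 2 + C ^ 2)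
    · field_simp
      ring
    · rw [hcs, mul_one]
  · trans f' v ^ 2 * R ^ 2 * (S ^ 2 + C ^ 2) + Z ^ 2
    · ring
    · rw [hcs, hR, hZ]; ring
end

section
/- Let U, V ⊆ ℝ be intervals and let σ(u,v) = (γ(u) + f(v)·ξ(u), z(v)) be a T-surface on U × V: γ, ξ : U → ℝ² differentiable with γ'(u) ≠ 0, ξ'(u) = λ(u)·γ'(u) for some λ : U → ℝ, ξ(u) and γ'(u) linearly independent, 1 + f(v)λ(u) ≠ 0 for all (u,v), and f, z : V → ℝ differentiable with (f'(v), z'(v)) ≠ (0,0). Let γ̃ : U → ℝ² be differentiable with γ̃'(u) = μ(u)·γ'(u) for some μ : U → ℝ, let f̃, z̃ : V → ℝ be differentiable with (f̃'(v), z̃'(v)) = ν(v)·(f'(v), z'(v)) for some ν : V → ℝ with ν(v) ≠ 0, and assume μ(u) + f̃(v)·λ(u) ≠ 0 for all (u,v). Define σ̃(u,v) = (γ̃(u) + f̃(v)·ξ(u), z̃(v)). Then for all (u,v): σ̃_u(u,v) = ( (μ(u)+f̃(v)λ(u)) / (1+f(v)λ(u)) )·σ_u(u,v), and σ̃_v(u,v)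 = ν(v)·σ_v(u,v). In particular σ̃ is a regular parametrized surface parallel to σ. -/
open Real Set

/-- The vector of `ℝ³` with ground-view component `w ∈ ℝ²` and height `r`. -/
noncomputable def emb (w : EuclideanSpace ℝ (Fin 2)) (r : ℝ) : EuclideanSpace ℝ (Fin 3) :=
  !₂[w 0, w 1, r]

/-- `emb` as a linear map. -/
noncomputable def embL : (EuclideanSpace ℝ (Fin 2) × ℝ) →ₗ[ℝ] EuclideanSpace ℝ (Fin 3) where
  toFun p := emb p.1 p.2
  map_add' p q := by
    ext i; fin_cases i <;> simp [emb]
  map_smul' c p := by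
    ext i; fin_cases i <;> simp [emb]

theorem emb_smul (c : ℝ) (w : EuclideanSpace ℝ (Fin 2)) (r : ℝ) :
    c • emb w r = emb (c • w) (c * r) := (embL.map_smul c (w, r)).symm

theorem emb_add (w w2 : EuclideanSpace ℝ (Fin 2)) (r r2 : ℝ) :
    emb w r + emb w2 r2 = emb (w + w2) (r + r2) := (embL.map_add (w, r) (w2, r2)).symm

theorem emb_eq_zero {w : EuclideanSpace ℝ (Fin 2)} {r : ℝ} (h : emb w r = 0) :
    w = 0 ∧ r = 0 := by
  have h0 := congrArg (fun x => x 0) h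
  have h1 := congrArg (fun x => x 1) h
  have h2 := congrArg (fun x => x 2) h
  simp [emb] at h0 h1 h2
  refine ⟨?_, h2⟩
  ext i; fin_cases i <;> simp [h0, h1]

theorem emb_deriv {w : ℝ → EuclideanSpace ℝ (Fin 2)} {r : ℝ → ℝ}
    {w2 : EuclideanSpace ℝ (Fin 2)} {r2 : ℝ} {S : Set ℝ} {t : ℝ}
    (hw : HasDerivWithinAt w w2 S t) (hr : HasDerivWithinAt r r2 S t) :
    HasDerivWithinAt (fun x => emb (w x) (r x)) (emb w2 r2) S t :=
  (LinearMap.toContinuousLinearMap embL).hasFDerivAt.comp_hasDerivWithinAt t (hw.prodMk hr)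

/-- **Theorem 5.9.** Given a T-surface `σ(u,v) = (γ(u) + f(v)ξ(u), z(v))` and data
`γ̃' = μγ'`, `(f̃', z̃') = ν(f', z')` with `ν ≠ 0` and `μ + f̃λ ≠ 0`, the surface
`σ̃(u,v) = (γ̃(u) + f̃(v)ξ(u), z̃(v))` is a regular parametrized surface parallel to `σ`:
`σ̃_u = ((μ + f̃λ)/(1 + fλ))·σ_u` and `σ̃_v = ν·σ_v`. -/
theorem stmt_18 (U V : Set ℝ) (hUc : U.OrdConnected) (hVc : V.OrdConnected)
    (γ ξ γ' : ℝ → EuclideanSpace ℝ (Fin 2)) (lam : ℝ → ℝ)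
    (f z f' z' : ℝ → ℝ)
    (hγ : ∀ u ∈ U, HasDerivWithinAt γ (γ' u) U u)
    (hγ'ne : ∀ u ∈ U, γ' u ≠ 0)
    (hξ : ∀ u ∈ U, HasDerivWithinAt ξ (lam u • γ' u) U u)
    (hind : ∀ u ∈ U, LinearIndependent ℝ ![ξ u, γ' u])
    (hreg : ∀ u ∈ U, ∀ v ∈ V, 1 + f v * lam u ≠ 0)
    (hf : ∀ v ∈ V, HasDerivWithinAt f (f' v) V v)
    (hz : ∀ v ∈ V, HasDerivWithinAt z (z' v) V v)
    (hfz : ∀ v ∈ V, ¬(f' v = 0 ∧ z' v = 0))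
    -- the parallel data
    (γt : ℝ → EuclideanSpace ℝ (Fin 2)) (mu : ℝ → ℝ)
    (ft zt : ℝ → ℝ) (ν : ℝ → ℝ)
    (hγt : ∀ u ∈ U, HasDerivWithinAt γt (mu u • γ' u) U u)
    (hft : ∀ v ∈ V, HasDerivWithinAt ft (ν v * f' v) V v)
    (hzt : ∀ v ∈ V, HasDerivWithinAt zt (ν v * z' v) V v)
    (hν : ∀ v ∈ V, ν v ≠ 0)
    (hregt : ∀ u ∈ U, ∀ v ∈ V, mu u + ft v * lam u ≠ 0)
    (σ σt : ℝ → ℝ → EuclideanSpace ℝ (Fin 3))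
    (hσ : ∀ u v, σ u v = emb (γ u + f v • ξ u) (z v))
    (hσt : ∀ u v, σt u v = emb (γt u + ft v • ξ u) (zt v)) :
    ∀ u ∈ U, ∀ v ∈ V,
      HasDerivWithinAt (fun u' => σ u' v)
        (emb (γ' u + (f v * lam u) • γ' u) 0) U u ∧
      HasDerivWithinAt (fun v' => σ u v') (emb (f' v • ξ u) (z' v)) V v ∧
      HasDerivWithinAt (fun u' => σt u' v)
        (emb (mu u • γ' u + (ft v * lam u) • γ' u) 0) U u ∧
      HasDerivWithinAt (fun v' => σt u v') (emb ((ν v * f' v) • ξ u) (ν v * z' v)) V v ∧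
      -- σ̃_u is the stated scalar multiple of σ_u and σ̃_v = ν · σ_v
      emb (mu u • γ' u + (ft v * lam u) • γ' u) 0 =
        ((mu u + ft v * lam u) / (1 + f v * lam u)) • emb (γ' u + (f v * lam u) • γ' u) 0 ∧
      emb ((ν v * f' v) • ξ u) (ν v * z' v) = ν v • emb (f' v • ξ u) (z' v) ∧
      -- σ̃ is regular
      LinearIndependent ℝ
        ![emb (mu u • γ' u + (ft v * lam u) • γ' u) 0,
          emb ((ν v * f' v) • ξ u) (ν v * z' v)] := by
  intro u hu v hv
  have e1 : σ = fun u v => emb (γ u + f v • ξ u) (z v) := by funext u v; exact hσ u v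
  have e2 : σt = fun u v => emb (γt u + ft v • ξ u) (zt v) := by funext u v; exact hσt u v
  subst e1 e2
  refine ⟨?_, ?_, ?_, ?_, ?_, ?_, ?_⟩
  · rw [← smul_smul]
    exact emb_deriv ((hγ u hu).add ((hξ u hu).const_smul (f v))) (hasDerivWithinAt_const _ _ _)
  · exact emb_deriv (((hf v hv).smul_const (ξ u)).const_add (γ u)) (hz v hv)
  · rw [← smul_smul]
    exact emb_deriv ((hγt u hu).add ((hξ u hu).const_smul (ft v))) (hasDerivWithinAt_const _ _ _)
  · exact emb_deriv (((hft v hv).smul_const (ξ u)).const_add (γt u)) (hzt v hv)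
  · have h := hreg u hu v hv
    rw [emb_smul, mul_zero]
    congr 1
    have e : γ' u + (f v * lam u) • γ' u = (1 + f v * lam u) • γ' u := by module
    rw [e, ← add_smul, smul_smul, div_mul_cancel₀ _ h]
  · rw [emb_smul, smul_smul]
  · rw [LinearIndependent.pair_iff]
    intro s t h
    rw [emb_smul, emb_smul, emb_add] at h
    obtain ⟨h1, h2⟩ := emb_eq_zero h
    have hi := LinearIndependent.pair_iff.1 (hind u hu) (t * (ν v * f' v))
      (s * (mu u + ft v * lam u)) (by rw [← h1]; module)
    have hs : s = 0 := (mul_eq_zero.1 hi.2).resolve_right (hregt u hu v hv)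
    refine ⟨hs, ?_⟩
    by_contra ht
    apply hfz v hv
    have hn := hν v hv
    constructor
    · simpa [ht, hn] using hi.1
    · simpa [ht, hn] using h2
end
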